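/- Let X be a finite dimensional Banach space over 𝕂, 𝒮 = (S_n)_{n∈ℤ} a sequence of invertible linear operators on X with sup_{n∈ℤ} max{‖S_n‖, ‖S_n⁻¹‖} < ∞, 𝓔 a basis of X with 𝒮-bounded projections, and 1 ≤ p < ∞. If the shift operator σ_𝒮 : ℓ_p(X) → ℓ_p(X) has the shadowing property, then the family {B_{ω(x)} : x ∈ 𝓔} of weighted backward shifts on ℓ_p(𝕂) is equi-shadowing: there exists a single constant K > 0 such that for every x ∈ 𝓔 and every bounded sequence (z_n)_{n∈ℤ} in ℓ_p(𝕂) there is a bounded sequence (u_n)_{n∈ℤ} in ℓ_p(𝕂) with u_{n+1} − B_{ω(x)}(u_n) = z_n for all n and sup_n ‖u_n‖ ≤ K · sup_n ‖z_n‖. -/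

import Mathlib

/-!
Fix a basis vector `x = b i` and write `e_n = eVec S x n`. Since `S_{n+1} e_{n+1} = ω_{n+1}(x) e_n`
(`apply_eVec`), the shift operator preserves the sequences `(a_n e_n)_n` and acts on them
as the weighted backward shift `B_{ω(x)}`. The coordinate functionals of the bases `𝓔_n` along `e_n`
therefore give a linear map `P : ℓ_p(X) → ℓ_p(𝕂)` with `P σ = B_{ω(x)} P` (`coord_apply`), and
`a ↦ (a_n e_n)_n` is an isometric right inverse of `P`. Bounded projections give
`‖P‖ ≤ C` with `C` independent of `x`. Shadowing passes to such a quotient: embed the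
pseudo-trajectory errors, solve the equation upstairs, and project the solution
(`ShadowingWith.of_retraction`). The shadowing constant becomes `K * C`, the same for every `x`.
-/

open scoped ENNReal

namespace ShiftOperators

variable {𝕂 : Type*} [RCLike 𝕂] {X : Type*} [NormedAddCommGroup X] [NormedSpace 𝕂 X]

/-- `backComp S n x = (S_{[1,n]})⁻¹ x = Sₙ⁻¹ (⋯ (S₁⁻¹ x))`, with the convention
`S_{[1,0]} = Id` (empty composition). -/
def backComp (S : ℤ → X ≃L[𝕂] X) : ℕ → X → X
  | 0, x => x
  | n + 1, x => (S ((n : ℤ) + 1)).symm (backComp S n x)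

/-- `fwdComp S n x = S_{[-n+1,0]} x = S_{-n+1} (⋯ (S₀ x))`, with the convention
`fwdComp S 0 x = x` (empty composition). -/
def fwdComp (S : ℤ → X ≃L[𝕂] X) : ℕ → X → X
  | 0, x => x
  | n + 1, x => S (-(n : ℤ)) (fwdComp S n x)

/-- The unit vectors `e_n(x)` associated to a sequence of operators `S` and a vector `x`:
`e_n(x) = (S_{[1,n]})⁻¹ x / ‖(S_{[1,n]})⁻¹ x‖` for `n ≥ 0` and
`e_n(x) = S_{[n+1,0]} x / ‖S_{[n+1,0]} x‖` for `n < 0`. -/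
noncomputable def eVec (S : ℤ → X ≃L[𝕂] X) (x : X) (n : ℤ) : X :=
  if 0 ≤ n then ((‖backComp S n.toNat x‖ : ℝ) : 𝕂)⁻¹ • backComp S n.toNat x
  else ((‖fwdComp S (-n).toNat x‖ : ℝ) : 𝕂)⁻¹ • fwdComp S (-n).toNat x

/-- The weights `ω_n(x)`: `ω_n(x) = ‖(S_{[1,n-1]})⁻¹ x‖ / ‖(S_{[1,n]})⁻¹ x‖` for `n > 0`
and `ω_n(x) = ‖S_{[n,0]} x‖ / ‖S_{[n+1,0]} x‖` for `n ≤ 0`. -/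
noncomputable def wt (S : ℤ → X ≃L[𝕂] X) (x : X) (n : ℤ) : ℝ :=
  if 0 < n then ‖backComp S (n - 1).toNat x‖ / ‖backComp S n.toNat x‖
  else ‖fwdComp S (1 - n).toNat x‖ / ‖fwdComp S (-n).toNat x‖

/-- `sup_{n ∈ ℤ} max {‖Sₙ‖, ‖Sₙ⁻¹‖} < ∞`. -/
def UnifBounded (S : ℤ → X ≃L[𝕂] X) : Prop :=
  ∃ C : ℝ, ∀ n : ℤ, ‖(S n : X →L[𝕂] X)‖ ≤ C ∧ ‖((S n).symm : X →L[𝕂] X)‖ ≤ C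

/-- A map is topologically transitive. -/
def TopolTransitive {Y : Type*} [TopologicalSpace Y] (T : Y → Y) : Prop :=
  ∀ U V : Set Y, IsOpen U → IsOpen V → U.Nonempty → V.Nonempty →
    ∃ n : ℕ, (T^[n] '' U ∩ V).Nonempty

/-- A map is (topologically) mixing. -/
def TopolMixing {Y : Type*} [TopologicalSpace Y] (T : Y → Y) : Prop :=
  ∀ U V : Set Y, IsOpen U → IsOpen V → U.Nonempty → V.Nonempty →
    ∃ N : ℕ, ∀ n ≥ N, (T^[n] '' U ∩ V).Nonempty

/-- A map has the (linear) shadowing property with constant `K`: every bounded sequence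
`(z_n)` admits a bounded sequence `(x_n)` with `x_{n+1} - T x_n = z_n` and
`sup ‖x_n‖ ≤ K sup ‖z_n‖`. -/
def ShadowingWith {Y : Type*} [NormedAddCommGroup Y] (T : Y → Y) (K : ℝ) : Prop :=
  ∀ z : ℤ → Y, BddAbove (Set.range fun n => ‖z n‖) →
    ∃ x : ℤ → Y, BddAbove (Set.range fun n => ‖x n‖) ∧
      (∀ n : ℤ, x (n + 1) - T (x n) = z n) ∧
      (⨆ n : ℤ, ‖x n‖) ≤ K * ⨆ n : ℤ, ‖z n‖

/-- A map has the (linear) shadowing property. -/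
def Shadowing {Y : Type*} [NormedAddCommGroup Y] (T : Y → Y) : Prop :=
  ∃ K > 0, ShadowingWith T K

/-- A bounded invertible operator is generalized hyperbolic: `Y = M ⊕ N` for closed
subspaces with `T M ⊆ M`, `T⁻¹ N ⊆ N`, `T` uniformly contracting on `M` and `T⁻¹`
uniformly contracting on `N`. -/
def GeneralizedHyperbolic {Y : Type*} [NormedAddCommGroup Y] [NormedSpace 𝕂 Y]
    (T : Y ≃L[𝕂] Y) : Prop :=
  ∃ M N : Submodule 𝕂 Y, IsClosed (M : Set Y) ∧ IsClosed (N : Set Y) ∧ IsCompl M N ∧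
    (∀ u ∈ M, T u ∈ M) ∧ (∀ v ∈ N, T.symm v ∈ N) ∧
    ∃ C > 0, ∃ lam : ℝ, 0 < lam ∧ lam < 1 ∧
      (∀ u ∈ M, ∀ n : ℕ, ‖(⇑T)^[n] u‖ ≤ C * lam ^ n * ‖u‖) ∧
      (∀ v ∈ N, ∀ n : ℕ, ‖(⇑T.symm)^[n] v‖ ≤ C * lam ^ n * ‖v‖)

end ShiftOperators

open ShiftOperators

/-- If `P` is an additive semiconjugacy from `T` to `B`, bounded by `C`, with a
norm-nonincreasing right inverse `J`, then shadowing of `T` with constant `K` gives shadowing of `B`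
with constant `K * C`. Neither linearity nor equivariance of `J` is needed. -/
theorem ShiftOperators.ShadowingWith.of_retraction {Y Z : Type*} [NormedAddCommGroup Y] [NormedAddCommGroup Z]
    {T : Y → Y} {B : Z → Z} {K C : ℝ} (hT : ShadowingWith T K) (hK : 0 ≤ K) (hC : 0 ≤ C)
    (J : Z → Y) (P : Y → Z) (hJ : ∀ z, ‖J z‖ ≤ ‖z‖) (hP : ∀ y, ‖P y‖ ≤ C * ‖y‖)
    (hPsub : ∀ y y', P (y - y') = P y - P y') (hPJ : ∀ z, P (J z) = z)
    (hPT : ∀ y, P (T y) = B (P y)) : ShadowingWith B (K * C) := by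
  intro z hz
  have hJz : ∀ n, ‖J (z n)‖ ≤ ⨆ n, ‖z n‖ := fun n => (hJ _).trans (le_ciSup hz n)
  obtain ⟨x, hx, hxeq, hxle⟩ := hT (fun n => J (z n)) ⟨_, Set.forall_mem_range.2 hJz⟩
  have hPx : ∀ n, ‖P (x n)‖ ≤ C * ⨆ n, ‖x n‖ := fun n =>
    (hP _).trans (mul_le_mul_of_nonneg_left (le_ciSup hx n) hC)
  refine ⟨fun n => P (x n), ⟨_, Set.forall_mem_range.2 hPx⟩, fun n => ?_, ?_⟩
  · rw [← hPT, ← hPsub, hxeq, hPJ]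
  · calc (⨆ n, ‖P (x n)‖) ≤ C * ⨆ n, ‖x n‖ := ciSup_le hPx
      _ ≤ C * (K * ⨆ n, ‖J (z n)‖) := mul_le_mul_of_nonneg_left hxle hC
      _ ≤ C * (K * ⨆ n, ‖z n‖) :=
        mul_le_mul_of_nonneg_left (mul_le_mul_of_nonneg_left (ciSup_le hJz) hK) hC
      _ = K * C * ⨆ n, ‖z n‖ := by ring

/-- The diagonal map on `ℓ_p` that applies `φ n` to the `n`-th entry, for a family of maps `φ n`
with `‖φ n v‖ ≤ C * ‖v‖` uniformly in `n`. -/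
noncomputable def lpDiag {E F : Type*} [NormedAddCommGroup E] [NormedAddCommGroup F] {p : ℝ≥0∞}
    (φ : ℤ → E → F) (C : ℝ) (hφ : ∀ n v, ‖φ n v‖ ≤ C * ‖v‖) (y : lp (fun _ : ℤ => E) p) :
    lp (fun _ : ℤ => F) p :=
  ⟨fun n => φ n (y n), (lp.memℓp (C • lp.toNorm y)).mono fun n => by
    simpa using hφ n (y n)⟩

theorem norm_lpDiag_le {E F : Type*} [NormedAddCommGroup E] [NormedAddCommGroup F] {p : ℝ≥0∞}
    [hp : Fact (1 ≤ p)] (φ : ℤ → E → F) {C : ℝ} (hC : 0 ≤ C) (hφ : ∀ n v, ‖φ n v‖ ≤ C * ‖v‖)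
    (y : lp (fun _ : ℤ => E) p) : ‖lpDiag φ C hφ y‖ ≤ C * ‖y‖ := by
  have hp0 : p ≠ 0 := (zero_lt_one.trans_le hp.out).ne'
  calc ‖lpDiag φ C hφ y‖ ≤ ‖C • lp.toNorm y‖ := lp.norm_mono hp0 fun n => by
        simpa [lpDiag, abs_of_nonneg hC] using hφ n (y n)
    _ = C * ‖y‖ := by
        rw [lp.norm_const_smul hp0, lp.norm_toNorm, Real.norm_of_nonneg hC]

section Orbit

variable {𝕂 : Type*} [RCLike 𝕂] {X : Type*} [NormedAddCommGroup X] [NormedSpace 𝕂 X]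

theorem backComp_ne_zero (S : ℤ → X ≃L[𝕂] X) {x : X} (hx : x ≠ 0) (n : ℕ) :
    backComp S n x ≠ 0 := by
  induction n with
  | zero => exact hx
  | succ n ih => simpa [backComp] using ih

theorem fwdComp_ne_zero (S : ℤ → X ≃L[𝕂] X) {x : X} (hx : x ≠ 0) (n : ℕ) :
    fwdComp S n x ≠ 0 := by
  induction n with
  | zero => exact hx
  | succ n ih => simpa [fwdComp] using ih

theorem norm_eVec (S : ℤ → X ≃L[𝕂] X) {x : X} (hx : x ≠ 0) (n : ℤ) : ‖eVec S x n‖ = 1 := by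
  have h1 := norm_ne_zero_iff.2 (backComp_ne_zero S hx n.toNat)
  have h2 := norm_ne_zero_iff.2 (fwdComp_ne_zero S hx (-n).toNat)
  unfold eVec
  split_ifs <;> simp [norm_smul, h1, h2]

/-- `S_n e_n(x) = ω_n(x) e_{n-1}(x)`, written at the index `n + 1`. -/
theorem apply_eVec (S : ℤ → X ≃L[𝕂] X) {x : X} (hx : x ≠ 0) (n : ℤ) :
    S (n + 1) (eVec S x (n + 1)) = ((wt S x (n + 1) : ℝ) : 𝕂) • eVec S x n := by
  -- For `n ≥ 0`, write `n = m`; otherwise write `n = -(m + 1)`. In the second case with `m = 0`,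
  -- `e_0(x)` is defined through `backComp` and agrees with the `fwdComp` expression.
  obtain ⟨m, rfl | rfl⟩ : ∃ m : ℕ, n = m ∨ n = -((m : ℤ) + 1) := by
    rcases le_or_gt 0 n with h | h
    · exact ⟨n.toNat, Or.inl (by omega)⟩
    · exact ⟨(-n - 1).toNat, Or.inr (by omega)⟩
  · have h1 : ((m : ℤ) + 1).toNat = m + 1 := by omega
    have h2 : (0 : ℤ) ≤ m + 1 := by omega
    have h3 : (0 : ℤ) < m + 1 := by omega
    have hm : ((‖backComp S m x‖ : ℝ) : 𝕂) ≠ 0 := by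
      simpa using backComp_ne_zero S hx m
    simp only [eVec, wt, h1, h2, h3, if_true, Int.natCast_nonneg, Int.toNat_natCast,
      add_sub_cancel_right, map_smul, smul_smul, RCLike.ofReal_div]
    rw [div_mul_eq_mul_div, mul_inv_cancel₀ hm, one_div]
    simp [backComp]
  · have e0 : -((m : ℤ) + 1) + 1 = -m := by ring
    have h1 : eVec S x (-(m : ℤ)) =
        ((‖fwdComp S m x‖ : ℝ) : 𝕂)⁻¹ • fwdComp S m x := by
      rcases m with _ | m
      · simp [eVec, backComp, fwdComp]
      · have : ¬ (0 : ℤ) ≤ -((m + 1 : ℕ) : ℤ) := by omega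
        simp only [eVec, this, if_false, neg_neg, Int.toNat_natCast]
    have h2 : ¬ (0 : ℤ) ≤ -((m : ℤ) + 1) := by omega
    have h3 : ¬ (0 : ℤ) < -(m : ℤ) := by omega
    have h4 : ((m : ℤ) + 1).toNat = m + 1 := by omega
    have h5 : (1 + (m : ℤ)).toNat = m + 1 := by omega
    have hm : ((‖fwdComp S (m + 1) x‖ : ℝ) : 𝕂) ≠ 0 := by
      simpa using fwdComp_ne_zero S hx (m + 1)
    rw [e0, h1]
    simp only [eVec, wt, h2, h3, h4, h5, if_false, neg_neg, sub_neg_eq_add, Int.toNat_natCast,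
      map_smul, smul_smul, RCLike.ofReal_div]
    rw [div_mul_eq_mul_div, mul_inv_cancel₀ hm, one_div]
    simp [fwdComp]

/-- The coordinates with respect to the moving bases `𝓔_n` turn `S_{n+1}` into multiplication by
the weights. -/
theorem coord_apply {ι : Type*} (S : ℤ → X ≃L[𝕂] X) (b : ι → X) (hb : ∀ i, b i ≠ 0)
    (E : ∀ _ : ℤ, Module.Basis ι 𝕂 X) (hE : ∀ n i, E n i = eVec S (b i) n) (i : ι) (n : ℤ) (v : X) :
    (E n).coord i (S (n + 1) v) =
      ((wt S (b i) (n + 1) : ℝ) : 𝕂) * (E (n + 1)).coord i v := by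
  classical
  have : (E n).coord i ∘ₗ (S (n + 1)).toLinearEquiv.toLinearMap =
      ((wt S (b i) (n + 1) : ℝ) : 𝕂) • (E (n + 1)).coord i := by
    refine (E (n + 1)).ext fun j => ?_
    have h : S (n + 1) (E (n + 1) j) = ((wt S (b j) (n + 1) : ℝ) : 𝕂) • E n j := by
      rw [hE, hE, apply_eVec S (hb j)]
    by_cases hj : j = i
    · subst hj
      simp [h, Algebra.smul_def]
    · simp [h, hj]
  exact LinearMap.congr_fun this v

end Orbit

/-- If `𝓔` is a basis with `𝒮`-bounded projections of a finite dimensional Banach space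
`X` and the shift operator `σ_𝒮 : ℓ_p(X) → ℓ_p(X)` has the shadowing property, then the
family of weighted backward shifts `{B_{ω(b i)} : i}` is equi-shadowing: a single
constant `K > 0` witnesses the shadowing property of all of them. -/
theorem equi_shadowing_of_shift_operator_shadowing
    {𝕂 : Type*} [RCLike 𝕂] {X : Type*} [NormedAddCommGroup X] [NormedSpace 𝕂 X]
    [CompleteSpace X] {d : ℕ}
    (S : ℤ → X ≃L[𝕂] X) (hS : UnifBounded S)
    (b : Fin d → X) (hbli : LinearIndependent 𝕂 b)
    (hbsp : Submodule.span 𝕂 (Set.range b) = ⊤)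
    (hEli : ∀ n : ℤ, LinearIndependent 𝕂 (fun i => eVec S (b i) n))
    (hEsp : ∀ n : ℤ, Submodule.span 𝕂 (Set.range fun i => eVec S (b i) n) = ⊤)
    (hproj : ∃ C : ℝ, ∀ (n : ℤ) (α : Fin d → 𝕂) (i : Fin d),
      ‖α i • eVec S (b i) n‖ ≤ C * ‖∑ j, α j • eVec S (b j) n‖)
    (p : ℝ≥0∞) [Fact (1 ≤ p)] (hp : p ≠ ∞)
    (σ : lp (fun _ : ℤ => X) p ≃L[𝕂] lp (fun _ : ℤ => X) p)
    (hσ : ∀ (u : lp (fun _ : ℤ => X) p) (n : ℤ), σ u n = S (n + 1) (u (n + 1)))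
    (B : Fin d → (lp (fun _ : ℤ => 𝕂) p ≃L[𝕂] lp (fun _ : ℤ => 𝕂) p))
    (hB : ∀ (i : Fin d) (a : lp (fun _ : ℤ => 𝕂) p) (n : ℤ),
      B i a n = ((wt S (b i) (n + 1) : ℝ) : 𝕂) * a (n + 1))
    (hshad : Shadowing ⇑σ) :
    ∃ K > 0, ∀ i : Fin d, ShadowingWith ⇑(B i) K := by
  obtain ⟨K, hK, hT⟩ := hshad
  obtain ⟨C, hC⟩ := hproj
  have hb : ∀ i, b i ≠ 0 := fun i => hbli.ne_zero i
  let E : ℤ → Module.Basis (Fin d) 𝕂 X := fun n => Module.Basis.mk (hEli n) (hEsp n).ge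
  have hE : ∀ n i, E n i = eVec S (b i) n := fun n i => Module.Basis.mk_apply _ _ i
  -- `C` itself could fail to be positive, for instance when `d = 0`.
  have hM : 0 < max C 1 := lt_max_of_lt_right one_pos
  have hcoord : ∀ i n v, ‖(E n).coord i v‖ ≤ max C 1 * ‖v‖ := by
    intro i n v
    have h := hC n ((E n).repr v) i
    simp only [← hE, (E n).sum_repr, norm_smul] at h
    rw [hE, norm_eVec S (hb i), mul_one] at h
    exact h.trans (mul_le_mul_of_nonneg_right (le_max_left _ _) (norm_nonneg v))
  refine ⟨K * max C 1, mul_pos hK hM, fun i => ?_⟩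
  have hemb : ∀ (n : ℤ) (a : 𝕂), ‖a • eVec S (b i) n‖ ≤ 1 * ‖a‖ := fun n a => by
    rw [norm_smul, norm_eVec S (hb i), mul_one, one_mul]
  refine hT.of_retraction hK.le hM.le (lpDiag _ 1 hemb) (lpDiag _ (max C 1) (hcoord i))
    (fun z => by simpa using norm_lpDiag_le _ zero_le_one hemb z)
    (norm_lpDiag_le _ hM.le (hcoord i)) (fun y y' => ?_) (fun z => ?_) (fun y => ?_)
  · ext n
    exact map_sub ((E n).coord i) (y n) (y' n)
  · ext n
    simp [lpDiag, ← hE]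
  · ext n
    rw [hB]
    change (E n).coord i (σ y n) = _
    rw [hσ, coord_apply S b hb E hE]
    rfl
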